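/- Let (t, n, b) be a smooth right-handed orthonormal frame on an open set U ⊆ ℝ³ with Ω_b = b·(curl b) = 0 identically on U, let H be a smooth scalar function and v a smooth nowhere-zero vector field on U with v = b × ∇H and t = v/‖v‖. Then at every point of U: ∂_s ln‖v‖ = −b·(curl n). -/

import Mathlib

/-!
Since `v = b × ∇H` is a positive multiple of `t`, the gradient of `H` has no `t`-component and its
`n`-component is `-‖v‖`, so `∇H = h b - ‖v‖ n` with `h = b·∇H` (`grad_decomp`). The curl of a
gradient vanishes (`pd_pd_comm`); the `b`-component of `curl (h b - ‖v‖ n) = 0` reads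
`h (b·curl b) - ‖v‖ (b·curl n) - b·(∇‖v‖ × n) = 0`, because `b·(∇h × b) = 0`.
Here `b·curl b = 0` by hypothesis and `b·(∇‖v‖ × n) = (n × b)·∇‖v‖ = ∂ₛ‖v‖`. Dividing by `‖v‖`
gives the claim.
-/


noncomputable section

/-- Three-dimensional Euclidean space. -/
abbrev E3 : Type := EuclideanSpace ℝ (Fin 3)

/-- The Euclidean dot product on ℝ³. -/
def dot (u v : E3) : ℝ := ∑ i, u i * v i

/-- The cross product on ℝ³. -/
def cross (u v : E3) : E3 :=
  (WithLp.equiv 2 (Fin 3 → ℝ)).symm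
    ![u 1 * v 2 - u 2 * v 1, u 2 * v 0 - u 0 * v 2, u 0 * v 1 - u 1 * v 0]

/-- Partial derivative of a scalar function in the `i`-th coordinate direction. -/
def pd (i : Fin 3) (f : E3 → ℝ) (x : E3) : ℝ :=
  fderiv ℝ f x (EuclideanSpace.single i 1)

/-- The gradient ∇f of a scalar function. -/
def grad (f : E3 → ℝ) (x : E3) : E3 :=
  (WithLp.equiv 2 (Fin 3 → ℝ)).symm ![pd 0 f x, pd 1 f x, pd 2 f x]

/-- The curl ∇×F of a vector field. -/
def curl (F : E3 → E3) (x : E3) : E3 :=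
  (WithLp.equiv 2 (Fin 3 → ℝ)).symm
    ![pd 1 (fun y => F y 2) x - pd 2 (fun y => F y 1) x,
      pd 2 (fun y => F y 0) x - pd 0 (fun y => F y 2) x,
      pd 0 (fun y => F y 1) x - pd 1 (fun y => F y 0) x]

/-- Directional derivative ∂ₛ f = t·∇f of a scalar function along a vector field t. -/
def ds (t : E3 → E3) (f : E3 → ℝ) (x : E3) : ℝ := dot (t x) (grad f x)

/-- Componentwise directional derivative (u·∇)w of a vector field w along u. -/
def dirDeriv (u w : E3 → E3) (x : E3) : E3 :=
  (WithLp.equiv 2 (Fin 3 → ℝ)).symm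
    ![fderiv ℝ (fun y => w y 0) x (u x),
      fderiv ℝ (fun y => w y 1) x (u x),
      fderiv ℝ (fun y => w y 2) x (u x)]

/-- Helicity density w·(curl w) of a vector field. -/
def hel (w : E3 → E3) (x : E3) : ℝ := dot (w x) (curl w x)

/-- Cross-helicity sum n·(curl b) + b·(curl n). -/
def crossHel (n b : E3 → E3) (x : E3) : ℝ :=
  dot (n x) (curl b x) + dot (b x) (curl n x)

/-- A smooth right-handed orthonormal (Serret–Frenet type) frame on U. -/
def IsFrameOn (t n b : E3 → E3) (U : Set E3) : Prop :=
  ContDiffOn ℝ (⊤ : ℕ∞) t U ∧ ContDiffOn ℝ (⊤ : ℕ∞) n U ∧ ContDiffOn ℝ (⊤ : ℕ∞) b U ∧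
  ∀ x ∈ U, ‖t x‖ = 1 ∧ ‖n x‖ = 1 ∧ ‖b x‖ = 1 ∧
    dot (t x) (n x) = 0 ∧ dot (t x) (b x) = 0 ∧ dot (n x) (b x) = 0 ∧
    b x = cross (t x) (n x)

lemma dot_self_of_norm_one {u : E3} (h : ‖u‖ = 1) :
    u 0 * u 0 + u 1 * u 1 + u 2 * u 2 = 1 := by
  have h2 := EuclideanSpace.real_norm_sq_eq u
  rw [h, Fin.sum_univ_three] at h2
  linarith

/-- If `b × g = s t` for a right-handed orthonormal frame `(t, n, b)`, then `g = (b·g) b - s n`. -/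
lemma grad_decomp {t n b g : E3} {s : ℝ} (ht : ‖t‖ = 1) (hb : ‖b‖ = 1)
    (htn : dot t n = 0) (hbc : b = cross t n) (hg : s • t = cross b g) (i : Fin 3) :
    g i = dot b g * b i - s * n i := by
  have ht' := dot_self_of_norm_one ht
  have hb' := dot_self_of_norm_one hb
  have hc (i : Fin 3) : b i = cross t n i := congrArg (fun w : E3 => w i) hbc
  have hd (i : Fin 3) : s * t i = cross b g i := congrArg (fun w : E3 => w i) hg
  have c0 := hc 0
  have c1 := hc 1
  have c2 := hc 2
  have d0 := hd 0
  have d1 := hd 1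
  have d2 := hd 2
  simp [cross] at c0 c1 c2 d0 d1 d2
  simp only [dot, Fin.sum_univ_three] at htn ⊢
  -- `n = b × t`, by expanding `(t × n) × t`
  have n0 : n 0 = b 1 * t 2 - b 2 * t 1 := by
    rw [c1, c2]; linear_combination t 0 * htn - n 0 * ht'
  have n1 : n 1 = b 2 * t 0 - b 0 * t 2 := by
    rw [c2, c0]; linear_combination t 1 * htn - n 1 * ht'
  have n2 : n 2 = b 0 * t 1 - b 1 * t 0 := by
    rw [c0, c1]; linear_combination t 2 * htn - n 2 * ht'
  -- `b × (b × g) = (b·g) b - g`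
  fin_cases i
  · change g 0 = _ * b 0 - s * n 0
    rw [n0]; linear_combination b 1 * d2 - b 2 * d1 - g 0 * hb'
  · change g 1 = _ * b 1 - s * n 1
    rw [n1]; linear_combination b 2 * d0 - b 0 * d2 - g 1 * hb'
  · change g 2 = _ * b 2 - s * n 2
    rw [n2]; linear_combination b 0 * d1 - b 1 * d0 - g 2 * hb'

lemma differentiableAt_pd {H : E3 → ℝ} {x : E3} (hH : ContDiffAt ℝ 2 H x) (i : Fin 3) :
    DifferentiableAt ℝ (fun y => pd i H y) x := by
  have h : DifferentiableAt ℝ (fderiv ℝ H) x :=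
    (hH.fderiv_right (m := 1) (by norm_num)).differentiableAt (by norm_num)
  exact h.clm_apply (differentiableAt_const _)

lemma pd_pd_comm {H : E3 → ℝ} {x : E3} (hH : ContDiffAt ℝ 2 H x) (i j : Fin 3) :
    pd i (fun y => pd j H y) x = pd j (fun y => pd i H y) x := by
  have h : DifferentiableAt ℝ (fderiv ℝ H) x :=
    (hH.fderiv_right (m := 1) (by norm_num)).differentiableAt (by norm_num)
  have key (i j : Fin 3) : pd i (fun y => pd j H y) x =
      fderiv ℝ (fderiv ℝ H) x (EuclideanSpace.single i 1) (EuclideanSpace.single j 1) := by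
    unfold pd
    rw [fderiv_clm_apply h (differentiableAt_const _)]
    simp
  rw [key, key]
  exact (hH.isSymmSndFDerivAt (by simp)).eq _ _

lemma pd_mul_sub_mul {h b s n : E3 → ℝ} {x : E3} (hh : DifferentiableAt ℝ h x)
    (hb : DifferentiableAt ℝ b x) (hs : DifferentiableAt ℝ s x) (hn : DifferentiableAt ℝ n x)
    (i : Fin 3) : pd i (fun y => h y * b y - s y * n y) x =
      h x * pd i b x + b x * pd i h x - (s x * pd i n x + n x * pd i s x) := by
  unfold pd
  rw [((hh.hasFDerivAt.fun_mul hb.hasFDerivAt).fun_sub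
    (hs.hasFDerivAt.fun_mul hn.hasFDerivAt)).fderiv]
  simp

lemma differentiableAt_coord {F : E3 → E3} {x : E3} (hF : DifferentiableAt ℝ F x) (i : Fin 3) :
    DifferentiableAt ℝ (fun y => F y i) x :=
  differentiableAt_euclidean.1 hF i

/-- if Ωᵦ = 0 and v = b × ∇H with t = v/‖v‖, then
∂ₛ ln‖v‖ = −b·(curl n). -/
theorem binormal_hamiltonian_log_norm
    (U : Set E3) (hU : IsOpen U) (t n b : E3 → E3)
    (hframe : IsFrameOn t n b U)
    (hΩb : ∀ x ∈ U, hel b x = 0)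
    (H : E3 → ℝ) (hH : ContDiffOn ℝ (⊤ : ℕ∞) H U)
    (v : E3 → E3) (hv : ContDiffOn ℝ (⊤ : ℕ∞) v U) (hv0 : ∀ x ∈ U, v x ≠ 0)
    (hham : ∀ x ∈ U, v x = cross (b x) (grad H x))
    (ht : ∀ x ∈ U, t x = ‖v x‖⁻¹ • v x) :
    ∀ x ∈ U, ds t (fun y => Real.log ‖v y‖) x = - dot (b x) (curl n x) := by
  intro x hx
  obtain ⟨-, hn, hb, hfr⟩ := hframe
  have hUx : U ∈ nhds x := hU.mem_nhds hx
  have hH2 : ContDiffAt ℝ 2 H x :=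
    (hH.contDiffAt hUx).of_le (WithTop.coe_le_coe.2 (le_top : (2 : ℕ∞) ≤ ⊤))
  have hnd : DifferentiableAt ℝ n x := (hn.contDiffAt hUx).differentiableAt (by simp)
  have hbd : DifferentiableAt ℝ b x := (hb.contDiffAt hUx).differentiableAt (by simp)
  have hvd : DifferentiableAt ℝ v x := (hv.contDiffAt hUx).differentiableAt (by simp)
  have hs : DifferentiableAt ℝ (fun y => ‖v y‖) x := hvd.norm ℝ (hv0 x hx)
  have hs0 : ‖v x‖ ≠ 0 := norm_ne_zero_iff.2 (hv0 x hx)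
  have hgd (i : Fin 3) (y : E3) : grad H y i = pd i H y := by
    fin_cases i <;> simp [grad]
  have hh : DifferentiableAt ℝ (fun y => dot (b y) (grad H y)) x := by
    simp only [dot, hgd]
    exact DifferentiableAt.fun_sum fun i _ =>
      (differentiableAt_coord hbd i).mul (differentiableAt_pd hH2 i)
  have hdec (i : Fin 3) : (fun y => pd i H y) =ᶠ[nhds x]
      fun y => dot (b y) (grad H y) * b y i - ‖v y‖ * n y i := by
    filter_upwards [hUx] with y hy
    obtain ⟨h1, -, h3, h4, -, -, h7⟩ := hfr y hy
    rw [← hgd]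
    refine grad_decomp h1 h3 h4 h7 ?_ i
    rw [← hham y hy, ht y hy, smul_inv_smul₀ (norm_ne_zero_iff.2 (hv0 y hy))]
  have hpp (j i : Fin 3) := (congrArg (fun L : E3 →L[ℝ] ℝ => L (EuclideanSpace.single j 1))
    (hdec i).fderiv_eq).trans (pd_mul_sub_mul hh (differentiableAt_coord hbd i) hs
      (differentiableAt_coord hnd i) j)
  -- the three components of `curl ∇H = 0`
  have C (i j : Fin 3) := (hpp i j).symm.trans ((pd_pd_comm hH2 i j).trans (hpp j i))
  have C0 := C 1 2
  have C1 := C 2 0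
  have C2 := C 0 1
  have hlog (i : Fin 3) :
      pd i (fun y => Real.log ‖v y‖) x = ‖v x‖⁻¹ * pd i (fun y => ‖v y‖) x := by
    unfold pd
    rw [(hs.hasFDerivAt.log hs0).fderiv]
    simp
  obtain ⟨-, h2, -, h4, -, -, h7⟩ := hfr x hx
  have hn' := dot_self_of_norm_one h2
  have hc (i : Fin 3) : b x i = cross (t x) (n x) i := congrArg (fun w : E3 => w i) h7
  have c0 := hc 0
  have c1 := hc 1
  have c2 := hc 2
  have hΩ := hΩb x hx
  simp [cross] at c0 c1 c2
  simp only [dot, Fin.sum_univ_three] at h4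
  -- `t = n × b`, by expanding `n × (t × n)`
  have t0 : t x 0 = n x 1 * b x 2 - n x 2 * b x 1 := by
    rw [c1, c2]; linear_combination n x 0 * h4 - t x 0 * hn'
  have t1 : t x 1 = n x 2 * b x 0 - n x 0 * b x 2 := by
    rw [c2, c0]; linear_combination n x 1 * h4 - t x 1 * hn'
  have t2 : t x 2 = n x 0 * b x 1 - n x 1 * b x 0 := by
    rw [c0, c1]; linear_combination n x 2 * h4 - t x 2 * hn'
  simp only [hel, dot, curl, Fin.sum_univ_three] at hΩ
  simp only [ds, dot, curl, grad, Fin.sum_univ_three, hlog]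
  simp at hΩ ⊢
  rw [t0, t1, t2]
  field_simp
  linear_combination dot (b x) (grad H x) * hΩ - b x 0 * C0 - b x 1 * C1 - b x 2 * C2
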